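/- Let n ≥ 1 and let α_t, α_x : ℝ × ℝ → Matrix (Fin n) (Fin n) ℝ be smooth (C^∞) matrix-valued functions satisfying the flatness (zero-curvature) equation ∂_t α_x − ∂_x α_t + [α_t, α_x] = 0 everywhere, where [a, b] = a b − b a. Then for every matrix c there exists a unique smooth function f : ℝ × ℝ → Matrix (Fin n) (Fin n) ℝ with f(0,0) = c satisfying the covariant-constancy equations ∂_t f + [α_t, f] = 0 and ∂_x f + [α_x, f] = 0 everywhere. -/

import Mathlib

attribute [local instance] Matrix.normedAddCommGroup Matrix.normedSpace

/-!
Let `d + A` be a flat connection on a vector space. A covariantly constant `f` is determined along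
the ray `s ↦ sp` by parallel transport from the origin, that is by a linear ODE on `[0, 1]` with
coefficient `a_p s = -A(sp)p`; this gives uniqueness. For existence, define `f p` as the endpoint
of that transport. Its solution is `h = (1 - K a_p)⁻¹ c` with `K a u = (s ↦ ∫₀ˢ a u)` a
quasinilpotent Volterra operator, so differentiability in `p` is differentiability of inversion in
a Banach algebra, and the derivative of `h` in a direction `v` is the solution starting at `0` of
the linearised ODE. Flatness says precisely that `s ↦ -s A(sp)v h(s)` solves the same problem, and
`s = 1` yields `df(p)v = -A(p)v f(p)`.

Matrices with the commutator enter only through the Jacobi identity, which turns the flatness of `α`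
into that of the connection `d + [α, ·]`.
-/

open Set
open scoped unitInterval Nat

section ContinuousFamilies

variable {K V E F : Type*} [TopologicalSpace K] [CompactSpace K]
  [NormedAddCommGroup V] [NormedSpace ℝ V] [NormedAddCommGroup E] [NormedSpace ℝ E]
  [NormedAddCommGroup F] [NormedSpace ℝ F]

/-- The bounded bilinear map sending a continuous family of operators `a` and a continuous map `u`
to `s ↦ a s (u s)`. -/
noncomputable def pointwiseApply : C(K, E →L[ℝ] F) →L[ℝ] C(K, E) →L[ℝ] C(K, F) :=
  LinearMap.mkContinuous₂
    (LinearMap.mk₂ ℝ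
      (fun (a : C(K, E →L[ℝ] F)) (u : C(K, E)) ↦ (⟨fun s ↦ a s (u s), by fun_prop⟩ : C(K, F)))
      (fun _ _ _ ↦ rfl) (fun _ _ _ ↦ rfl)
      (fun a u v ↦ by ext s; exact map_add (a s) (u s) (v s))
      (fun c a u ↦ by ext s; exact map_smul (a s) c (u s))) 1
    (fun a u ↦ by
      rw [one_mul, ContinuousMap.norm_le _ (by positivity)]
      exact fun s ↦ (a s).le_of_opNorm_le_of_le (a.norm_coe_le_norm s) (u.norm_coe_le_norm s))

@[simp]
theorem pointwiseApply_apply (a : C(K, E →L[ℝ] F)) (u : C(K, E)) (s : K) :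
    pointwiseApply a u s = a s (u s) :=
  rfl

theorem hasFDerivAt_curry {f : C(V × K, F)} {f' : C(V × K, V →L[ℝ] F)}
    (hf : ∀ p s, HasFDerivAt (fun q ↦ f (q, s)) (f' (p, s)) p) (p : V) :
    HasFDerivAt f.curry (pointwiseApply (f'.curry p) ∘L ContinuousLinearMap.const ℝ K) p := by
  rw [hasFDerivAt_iff_isLittleO, Asymptotics.isLittleO_iff]
  intro ε hε
  obtain ⟨δ, hδ, hf'δ⟩ :=
    (Metric.continuous_iff (β := C(K, V →L[ℝ] F))).1 f'.curry.continuous p ε hε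
  filter_upwards [Metric.ball_mem_nhds p hδ] with q hq
  rw [ContinuousMap.norm_le _ (by positivity)]
  intro s
  refine (convex_ball p δ).norm_image_sub_le_of_norm_hasFDerivWithin_le'
    (fun x _ ↦ (hf x s).hasFDerivWithinAt) (fun x hx ↦ ?_) (Metric.mem_ball_self hδ) hq
  rw [← dist_eq_norm]
  exact (ContinuousMap.dist_apply_le_dist s).trans (hf'δ x hx).le

end ContinuousFamilies

section Volterra

variable {E : Type*} [NormedAddCommGroup E] [NormedSpace ℝ E]

/-- The operator sending a continuous `u` on `[0, 1]` to its primitive `s ↦ ∫ τ in 0..s, u τ`. -/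
noncomputable def primitive : C(I, E) →L[ℝ] C(I, E) :=
  LinearMap.mkContinuous
    { toFun u := ⟨fun s ↦ ∫ τ in (0 : ℝ)..s, IccExtend zero_le_one u τ,
        (intervalIntegral.continuous_primitive
          (fun _ _ ↦ u.continuous.Icc_extend'.intervalIntegrable _ _) 0).comp
          continuous_subtype_val⟩
      map_add' u v := by
        ext s
        exact intervalIntegral.integral_add (u.continuous.Icc_extend'.intervalIntegrable _ _)
          (v.continuous.Icc_extend'.intervalIntegrable _ _)
      map_smul' c u := by
        ext s
        exact intervalIntegral.integral_smul c _ } 1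
    (fun u ↦ by
      rw [one_mul, ContinuousMap.norm_le _ (norm_nonneg u)]
      intro s
      refine (intervalIntegral.norm_integral_le_of_norm_le_const
        fun τ _ ↦ u.norm_coe_le_norm (projIcc 0 1 zero_le_one τ)).trans ?_
      rw [sub_zero, abs_of_nonneg s.2.1]
      exact mul_le_of_le_one_right (norm_nonneg u) s.2.2)

theorem primitive_apply (u : C(I, E)) (s : I) :
    primitive u s = ∫ τ in (0 : ℝ)..s, IccExtend zero_le_one u τ :=
  rfl

theorem primitive_apply_of_hasDerivWithinAt [CompleteSpace E] {g : C(I, E)} {U : ℝ → E}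
    (hU : ∀ s : I, HasDerivWithinAt U (g s) I s) (s : I) : primitive g s = U s - U 0 := by
  have hsub : Icc 0 (s : ℝ) ⊆ I := Icc_subset_Icc_right s.2.2
  refine intervalIntegral.integral_eq_sub_of_hasDerivAt_of_le s.2.1
    (fun τ hτ ↦ (hU ⟨τ, hsub hτ⟩).continuousWithinAt.mono hsub) (fun τ hτ ↦ ?_)
    (g.continuous.Icc_extend'.intervalIntegrable _ _)
  have hτI : τ ∈ I := hsub (Ioo_subset_Icc_self hτ)
  rw [IccExtend_of_mem _ _ hτI]
  exact (hU ⟨τ, hτI⟩).hasDerivAt (Icc_mem_nhds hτ.1 (hτ.2.trans_le s.2.2))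

theorem hasDerivWithinAt_primitive [CompleteSpace E] (g : C(I, E)) (s : I) :
    HasDerivWithinAt (IccExtend zero_le_one (primitive g)) (g s) I s := by
  have hderiv := (g.continuous.Icc_extend' (h := zero_le_one)).integral_hasStrictDerivAt 0 (s : ℝ)
  rw [IccExtend_val] at hderiv
  exact hderiv.hasDerivAt.hasDerivWithinAt.congr_of_mem
    (fun τ hτ ↦ IccExtend_of_mem _ _ hτ) s.2

/-- The Volterra operator `u ↦ (s ↦ ∫ τ in 0..s, a τ (u τ))`, as a bounded linear function of its
kernel `a`. -/
noncomputable def volterra : C(I, E →L[ℝ] E) →L[ℝ] C(I, E) →L[ℝ] C(I, E) :=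
  ContinuousLinearMap.compL ℝ _ _ _ primitive ∘L pointwiseApply

theorem volterra_apply (a : C(I, E →L[ℝ] E)) (u : C(I, E)) :
    volterra a u = primitive (pointwiseApply a u) :=
  rfl

theorem norm_volterra_pow_apply_le (a : C(I, E →L[ℝ] E)) (u : C(I, E)) (n : ℕ) (s : I) :
    ‖(volterra a ^ n) u s‖ ≤ ‖a‖ ^ n * ‖u‖ * (s ^ n / n !) := by
  induction n generalizing s with
  | zero => simpa using u.norm_coe_le_norm s
  | succ n ih =>
    rw [pow_succ', mul_apply_eq_comp, volterra_apply, primitive_apply]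
    calc ‖∫ τ in (0 : ℝ)..s, IccExtend zero_le_one (pointwiseApply a ((volterra a ^ n) u)) τ‖
      _ ≤ ∫ τ in (0 : ℝ)..s, ‖a‖ * (‖a‖ ^ n * ‖u‖ * (τ ^ n / n !)) := by
        refine intervalIntegral.norm_integral_le_of_norm_le s.2.1 (.of_forall fun τ hτ ↦ ?_)
          (Continuous.intervalIntegrable (by fun_prop) _ _)
        rw [IccExtend_of_mem _ _ ⟨hτ.1.le, hτ.2.trans s.2.2⟩]
        exact (a ⟨τ, _⟩).le_of_opNorm_le_of_le (a.norm_coe_le_norm _) (ih ⟨τ, _⟩)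
      _ = ‖a‖ ^ (n + 1) * ‖u‖ * (s ^ (n + 1) / (n + 1)!) := by
        simp only [intervalIntegral.integral_const_mul, intervalIntegral.integral_div, integral_pow,
          Nat.factorial_succ]
        push_cast
        field_simp
        ring

theorem norm_volterra_pow_le (a : C(I, E →L[ℝ] E)) (n : ℕ) :
    ‖volterra a ^ n‖ ≤ ‖a‖ ^ n / n ! := by
  refine ContinuousLinearMap.opNorm_le_bound _ (by positivity) fun u ↦ ?_
  rw [ContinuousMap.norm_le _ (by positivity)]
  intro s
  have hs : (s : ℝ) ^ n ≤ 1 := pow_le_one₀ s.2.1 s.2.2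
  calc ‖(volterra a ^ n) u s‖ ≤ ‖a‖ ^ n * ‖u‖ * (s ^ n / n !) := norm_volterra_pow_apply_le a u n s
    _ ≤ ‖a‖ ^ n * ‖u‖ * (1 / n !) := by gcongr
    _ = ‖a‖ ^ n / n ! * ‖u‖ := by ring

variable [CompleteSpace E]

theorem isUnit_one_sub_volterra (a : C(I, E →L[ℝ] E)) : IsUnit (1 - volterra a) := by
  obtain ⟨n, hn⟩ :=
    ((FloorSemiring.tendsto_pow_div_factorial_atTop ‖a‖).eventually_lt_const one_pos).exists
  have hunit : IsUnit (1 - volterra a ^ n) :=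
    isUnit_one_sub_of_norm_lt_one (R := C(I, E) →L[ℝ] C(I, E))
      ((norm_volterra_pow_le a n).trans_lt hn)
  rw [← mul_neg_geom_sum] at hunit
  have hcomm : Commute (1 - volterra a) (∑ i ∈ Finset.range n, volterra a ^ i) :=
    (mul_neg_geom_sum _ n).trans (geom_sum_mul_neg _ n).symm
  exact (hcomm.isUnit_mul_iff.1 hunit).1

/-- The solution on `[0, 1]` of the linear initial value problem `u' = a u`, `u 0 = c`, written as
the solution `(1 - volterra a)⁻¹ c` of the equivalent integral equation. -/
noncomputable def linearODESolution (a : C(I, E →L[ℝ] E)) (c : E) : C(I, E) :=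
  Ring.inverse (1 - volterra a) (ContinuousMap.const I c)

theorem inverse_one_sub_volterra_apply_eq_iff {a : C(I, E →L[ℝ] E)} {u w : C(I, E)} :
    Ring.inverse (1 - volterra a) w = u ↔ w = (1 - volterra a) u := by
  have h := isUnit_one_sub_volterra a
  constructor
  · rintro rfl
    exact (DFunLike.congr_fun (Ring.mul_inverse_cancel _ h) w).symm
  · rintro rfl
    exact DFunLike.congr_fun (Ring.inverse_mul_cancel _ h) u

theorem inverse_one_sub_volterra_eq_of_hasDerivWithinAt {a : C(I, E →L[ℝ] E)} {g u : C(I, E)}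
    {U : ℝ → E} (hUu : ∀ s : I, U s = u s)
    (hU : ∀ s : I, HasDerivWithinAt U (a s (U s) + g s) I s) :
    Ring.inverse (1 - volterra a) (ContinuousMap.const I (U 0) + primitive g) = u := by
  rw [inverse_one_sub_volterra_apply_eq_iff]
  ext s
  have hint := primitive_apply_of_hasDerivWithinAt (g := pointwiseApply a u + g) (U := U)
    (fun s ↦ by simpa [hUu] using hU s) s
  rw [map_add, ← volterra_apply, hUu] at hint
  have hsum : volterra a u s + primitive g s = u s - U 0 := hint
  simp only [ContinuousMap.add_apply, ContinuousMap.const_apply, _root_.sub_apply,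
    one_apply_eq_self, ContinuousMap.sub_apply, eq_sub_of_add_eq' hsum]
  abel

theorem linearODESolution_eq_of_hasDerivWithinAt {a : C(I, E →L[ℝ] E)} {u : C(I, E)} {U : ℝ → E}
    (hUu : ∀ s : I, U s = u s) (hU : ∀ s : I, HasDerivWithinAt U (a s (U s)) I s) :
    linearODESolution a (U 0) = u := by
  have := inverse_one_sub_volterra_eq_of_hasDerivWithinAt (a := a) (g := 0) hUu
    (fun s ↦ by simpa only [ContinuousMap.zero_apply, add_zero] using hU s)
  rwa [map_zero, add_zero] at this

theorem linearODESolution_eq_const_add (a : C(I, E →L[ℝ] E)) (c : E) :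
    linearODESolution a c =
      ContinuousMap.const I c + primitive (pointwiseApply a (linearODESolution a c)) := by
  have := inverse_one_sub_volterra_apply_eq_iff.1 (rfl : _ = linearODESolution a c)
  rw [this, ← volterra_apply]
  simp

theorem hasDerivWithinAt_linearODESolution (a : C(I, E →L[ℝ] E)) (c : E) (s : I) :
    HasDerivWithinAt (IccExtend zero_le_one (linearODESolution a c))
      (a s (linearODESolution a c s)) I s := by
  have h := (hasDerivWithinAt_primitive (pointwiseApply a (linearODESolution a c)) s).const_add c
  exact h.congr_of_mem (fun τ _ ↦ DFunLike.congr_fun (linearODESolution_eq_const_add a c)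
    (projIcc 0 1 zero_le_one τ)) s.2

theorem hasFDerivAt_inverse_one_sub_apply {V X Y : Type*} [NormedAddCommGroup V]
    [NormedSpace ℝ V] [NormedAddCommGroup X] [NormedSpace ℝ X] [CompleteSpace X]
    [NormedAddCommGroup Y] [NormedSpace ℝ Y] (L : Y →L[ℝ] X →L[ℝ] X) (w : X) {y : V → Y}
    {y' : V →L[ℝ] Y} {p : V} (hunit : IsUnit (1 - L (y p))) (hy : HasFDerivAt y y' p) :
    HasFDerivAt (fun q ↦ Ring.inverse (1 - L (y q)) w)
      (Ring.inverse (1 - L (y p)) ∘L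
        ContinuousLinearMap.apply ℝ X (Ring.inverse (1 - L (y p)) w) ∘L L ∘L y') p := by
  have hinv : HasFDerivAt Ring.inverse _ (1 - L (y p)) :=
    hasFDerivAt_ringInverse (𝕜 := ℝ) hunit.unit
  have hLy : HasFDerivAt (fun q ↦ L (y q)) (L ∘L y') p :=
    HasFDerivAt.comp (E := V) (F := Y) (G := X →L[ℝ] X) p L.hasFDerivAt hy
  have hcomp := (hinv.comp p (hLy.const_sub 1)).clm_apply (hasFDerivAt_const w p)
  refine hcomp.congr_fderiv ?_
  ext v
  simp [← Ring.inverse_of_isUnit hunit]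

theorem hasFDerivAt_linearODESolution {V : Type*} [NormedAddCommGroup V] [NormedSpace ℝ V]
    {a : V → C(I, E →L[ℝ] E)} {a' : V →L[ℝ] C(I, E →L[ℝ] E)} {p : V} (ha : HasFDerivAt a a' p)
    (c : E) :
    HasFDerivAt (fun q ↦ linearODESolution (a q) c)
      (Ring.inverse (1 - volterra (a p)) ∘L
        ContinuousLinearMap.apply ℝ C(I, E) (linearODESolution (a p) c) ∘L volterra ∘L a') p := by
  have hderiv := hasFDerivAt_inverse_one_sub_apply (V := V) (volterra (E := E))
    (ContinuousMap.const I c) (y := a) (y' := a') (p := p)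
  exact hderiv (isUnit_one_sub_volterra (a p)) ha

end Volterra

section Connection

variable {V E : Type*} [NormedAddCommGroup V] [NormedSpace ℝ V] [NormedAddCommGroup E]
  [NormedSpace ℝ E]

/-- The curvature `dA + A ∧ A` of the connection `d + A`, evaluated on the constant vector fields
`u` and `v`. -/
noncomputable def connectionCurvature (A : V → V →L[ℝ] E →L[ℝ] E) (p u v : V) : E →L[ℝ] E :=
  fderiv ℝ A p u v - fderiv ℝ A p v u + (A p u * A p v - A p v * A p u)

/-- `f` is covariantly constant for the connection `d + A` if `df = -A f`. -/
def IsCovariantlyConstant (A : V → V →L[ℝ] E →L[ℝ] E) (f : V → E) : Prop :=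
  ∀ p, HasFDerivAt f (-(ContinuousLinearMap.apply ℝ E (f p) ∘L A p)) p

variable {A : V → V →L[ℝ] E →L[ℝ] E}

theorem IsCovariantlyConstant.contDiff {f : V → E} {k : ℕ∞} (hf : IsCovariantlyConstant A f)
    (hA : ContDiff ℝ k A) : ContDiff ℝ k f := by
  refine contDiff_iff_forall_nat_le.2 fun m hm ↦ ?_
  induction m with
  | zero => exact contDiff_zero.2 (continuous_iff_continuousAt.2 fun p ↦ (hf p).continuousAt)
  | succ m ih =>
    have hfm : ContDiff ℝ m f := ih ((Nat.cast_le.2 m.le_succ).trans hm)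
    have hAm : ContDiff ℝ m A := hA.of_le (mod_cast (Nat.cast_le.2 m.le_succ).trans hm)
    have hfderiv : fderiv ℝ f = fun p ↦ -(ContinuousLinearMap.apply ℝ E (f p) ∘L A p) :=
      funext fun p ↦ (hf p).fderiv
    rw [Nat.cast_succ, contDiff_succ_iff_fderiv]
    refine ⟨fun p ↦ (hf p).differentiableAt, by simp, ?_⟩
    rw [hfderiv]
    fun_prop

/-- The family of coefficients `(p, s) ↦ -A(sp)p` of the equation of parallel transport along the
rays `s ↦ sp`. -/
noncomputable def rayCoefficient (A : V → V →L[ℝ] E →L[ℝ] E) (hA : Continuous A) :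
    C(V × I, E →L[ℝ] E) :=
  ⟨fun x ↦ -A ((x.2 : ℝ) • x.1) x.1, by fun_prop⟩

theorem rayCoefficient_curry_apply (hA : Continuous A) (p : V) (s : I) :
    (rayCoefficient A hA).curry p s = -A ((s : ℝ) • p) p :=
  rfl

theorem exists_hasFDerivAt_rayCoefficient_curry (hA : ContDiff ℝ 1 A) (p : V) :
    ∃ D : V →L[ℝ] C(I, E →L[ℝ] E),
      HasFDerivAt (rayCoefficient A hA.continuous).curry D p ∧
      ∀ v s, D v s = -((s : ℝ) • fderiv ℝ A ((s : ℝ) • p) v p + A ((s : ℝ) • p) v) := by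
  have hA₀ : Continuous A := hA.continuous
  have hA₁ : Continuous (fderiv ℝ A) := hA.continuous_fderiv one_ne_zero
  let D : C(V × I, V →L[ℝ] E →L[ℝ] E) :=
    ⟨fun x ↦ -((x.2 : ℝ) • (ContinuousLinearMap.apply ℝ (E →L[ℝ] E) x.1 ∘L
      fderiv ℝ A ((x.2 : ℝ) • x.1)) + A ((x.2 : ℝ) • x.1)), by fun_prop⟩
  refine ⟨_, hasFDerivAt_curry (f' := D) (fun q s ↦ ?_) p, fun v s ↦ rfl⟩
  have hsmul : HasFDerivAt (fun q : V ↦ (s : ℝ) • q) ((s : ℝ) • ContinuousLinearMap.id ℝ V) q :=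
    (hasFDerivAt_id q).const_smul (s : ℝ)
  have hAsq : HasFDerivAt (fun q ↦ A ((s : ℝ) • q)) _ q :=
    HasFDerivAt.comp (E := V) (F := V) (G := V →L[ℝ] E →L[ℝ] E) q
      (hA.differentiable one_ne_zero _).hasFDerivAt hsmul
  refine (hAsq.clm_apply (hasFDerivAt_id q)).neg.congr_fderiv ?_
  ext1 v
  simp [D, add_comm]

theorem hasDerivAt_apply_smul {s : ℝ} {p : V} (hA : DifferentiableAt ℝ A (s • p)) (v : V) :
    HasDerivAt (fun τ : ℝ ↦ A (τ • p) v) (fderiv ℝ A (s • p) p v) s := by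
  have hray : HasDerivAt (fun τ : ℝ ↦ τ • p) p s := by
    simpa using (hasDerivAt_id s).smul_const p
  have hAv : HasFDerivAt (fun q ↦ A q v) ((fderiv ℝ A (s • p)).flip v) (s • p) := by
    simpa using hA.hasFDerivAt.clm_apply (hasFDerivAt_const v _)
  exact hAv.comp_hasDerivAt s hray

/-- Flatness makes `s ↦ -s A(sp)v H(s)` a solution of the equation of parallel transport linearised
at `H` in the direction `v`. -/
theorem hasDerivWithinAt_radialVariation {S : Set ℝ} {s : ℝ} {p v : V} {H : ℝ → E}
    (hA : DifferentiableAt ℝ A (s • p)) (hflat : connectionCurvature A (s • p) p v = 0)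
    (hH : HasDerivWithinAt H (-A (s • p) p (H s)) S s) :
    HasDerivWithinAt (fun τ ↦ -(τ • A (τ • p) v (H τ)))
      (-A (s • p) p (-(s • A (s • p) v (H s))) +
        -(s • fderiv ℝ A (s • p) v p + A (s • p) v) (H s)) S s := by
  have hcurv : fderiv ℝ A (s • p) p v (H s) - fderiv ℝ A (s • p) v p (H s) +
      (A (s • p) p (A (s • p) v (H s)) - A (s • p) v (A (s • p) p (H s))) = 0 :=
    DFunLike.congr_fun hflat (H s)
  have hAvH := (hasDerivAt_apply_smul hA v).hasDerivWithinAt.clm_apply hH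
  refine ((hasDerivWithinAt_id s S).smul hAvH).neg.congr_deriv ?_
  simp only [id, map_neg, map_smul, _root_.add_apply, _root_.smul_apply]
  linear_combination (norm := module) (-s) • hcurv

variable [CompleteSpace E]

/-- Parallel transport of `c` along the ray `s ↦ sp`, as a function of `s ∈ [0, 1]`. -/
noncomputable def radialTransport (hA : Continuous A) (c : E) (p : V) : C(I, E) :=
  linearODESolution ((rayCoefficient A hA).curry p) c

theorem IsCovariantlyConstant.radialTransport_eq {f : V → E} (hf : IsCovariantlyConstant A f)
    (hA : Continuous A) (p : V) (s : I) : radialTransport hA (f 0) p s = f ((s : ℝ) • p) := by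
  have hcont : Continuous f := continuous_iff_continuousAt.2 fun p ↦ (hf p).continuousAt
  let u : C(I, E) := ⟨fun s ↦ f ((s : ℝ) • p), by fun_prop⟩
  have hu := linearODESolution_eq_of_hasDerivWithinAt (a := (rayCoefficient A hA).curry p) (u := u)
    (U := fun τ ↦ f (τ • p)) (fun s ↦ rfl) fun s ↦ by
      have hray : HasDerivAt (fun τ : ℝ ↦ τ • p) p s := by
        simpa using (hasDerivAt_id (s : ℝ)).smul_const p
      exact ((hf _).comp_hasDerivAt (s : ℝ) hray).hasDerivWithinAt
  simp only [zero_smul] at hu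
  exact DFunLike.congr_fun hu s

theorem radialTransport_zero (hA : Continuous A) (c : E) :
    radialTransport hA c 0 = ContinuousMap.const I c :=
  linearODESolution_eq_of_hasDerivWithinAt (U := fun _ ↦ c) (fun _ ↦ rfl) fun s ↦ by
    rw [rayCoefficient_curry_apply, map_zero, neg_zero]
    exact hasDerivWithinAt_const (s : ℝ) I c

theorem inverse_one_sub_volterra_radialVariation_apply_one (hA : ContDiff ℝ 1 A)
    (hflat : ∀ p u v, connectionCurvature A p u v = 0) (c : E) (p v : V) {b : C(I, E →L[ℝ] E)}
    (hb : ∀ s : I, b s = -((s : ℝ) • fderiv ℝ A ((s : ℝ) • p) v p + A ((s : ℝ) • p) v)) :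
    Ring.inverse (1 - volterra ((rayCoefficient A hA.continuous).curry p))
      (volterra b (radialTransport hA.continuous c p)) 1 =
      -A p v (radialTransport hA.continuous c p 1) := by
  let h := radialTransport hA.continuous c p
  let k : C(I, E) := ⟨fun s ↦ -((s : ℝ) • A ((s : ℝ) • p) v (h s)), by
    have hA₀ : Continuous A := hA.continuous
    fun_prop⟩
  have hk := inverse_one_sub_volterra_eq_of_hasDerivWithinAt
    (a := (rayCoefficient A hA.continuous).curry p) (g := pointwiseApply b h) (u := k)
    (U := fun τ ↦ -(τ • A (τ • p) v (IccExtend zero_le_one h τ)))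
    (fun s ↦ by simp [k]) fun s ↦ by
      have hH : HasDerivWithinAt (IccExtend zero_le_one h)
          (-A ((s : ℝ) • p) p (IccExtend zero_le_one h s)) I s := by
        rw [IccExtend_val]
        exact hasDerivWithinAt_linearODESolution _ c s
      have hvar := hasDerivWithinAt_radialVariation (hA.differentiable one_ne_zero _)
        (hflat _ p v) hH
      rw [pointwiseApply_apply, hb]
      rwa [IccExtend_val] at hvar ⊢
  simp only [zero_smul, neg_zero, ContinuousMap.const_zero, zero_add, ← volterra_apply] at hk
  rw [hk]
  simp [k, h]

theorem hasFDerivAt_radialTransport_apply_one (hA : ContDiff ℝ 1 A)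
    (hflat : ∀ p u v, connectionCurvature A p u v = 0) (c : E) (p : V) :
    HasFDerivAt (fun q ↦ radialTransport hA.continuous c q 1)
      (-(ContinuousLinearMap.apply ℝ E (radialTransport hA.continuous c p 1) ∘L A p)) p := by
  obtain ⟨D, hD, hDv⟩ := exists_hasFDerivAt_rayCoefficient_curry hA p
  have hsol := hasFDerivAt_linearODESolution hD c
  refine ((ContinuousMap.evalCLM ℝ (1 : I)).hasFDerivAt.comp p hsol).congr_fderiv ?_
  ext v
  exact inverse_one_sub_volterra_radialVariation_apply_one hA hflat c p v (hDv v)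

theorem existsUnique_isCovariantlyConstant (hA : ContDiff ℝ 1 A)
    (hflat : ∀ p u v, connectionCurvature A p u v = 0) (c : E) :
    ∃! f : V → E, f 0 = c ∧ IsCovariantlyConstant A f := by
  refine ⟨fun p ↦ radialTransport hA.continuous c p 1, ⟨?_, ?_⟩, ?_⟩
  · simp [radialTransport_zero]
  · exact hasFDerivAt_radialTransport_apply_one hA hflat c
  · rintro f ⟨rfl, hf⟩
    ext p
    simp [hf.radialTransport_eq hA.continuous]

end Connection

section Plane

variable {E : Type*} [NormedAddCommGroup E] [NormedSpace ℝ E] {αt αx : ℝ × ℝ → E →L[ℝ] E}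

/-- The connection form `αt dt + αx dx` on the plane. -/
noncomputable def planarConnection (αt αx : ℝ × ℝ → E →L[ℝ] E) (p : ℝ × ℝ) :
    ℝ × ℝ →L[ℝ] E →L[ℝ] E :=
  (ContinuousLinearMap.fst ℝ ℝ ℝ).smulRight (αt p) +
    (ContinuousLinearMap.snd ℝ ℝ ℝ).smulRight (αx p)

theorem planarConnection_apply (p v : ℝ × ℝ) :
    planarConnection αt αx p v = v.1 • αt p + v.2 • αx p :=
  rfl

theorem contDiff_planarConnection {k : ℕ∞} (hαt : ContDiff ℝ k αt) (hαx : ContDiff ℝ k αx) :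
    ContDiff ℝ k (planarConnection αt αx) :=
  (contDiff_const.smulRight hαt).add (contDiff_const.smulRight hαx)

theorem apply_eq_fst_smul_add_snd_smul {F : Type*} [NormedAddCommGroup F] [NormedSpace ℝ F]
    (L : ℝ × ℝ →L[ℝ] F) (v : ℝ × ℝ) : L v = v.1 • L (1, 0) + v.2 • L (0, 1) := by
  rw [← map_smul, ← map_smul, ← map_add]
  simp

theorem fderiv_planarConnection_apply {p : ℝ × ℝ} (hαt : DifferentiableAt ℝ αt p)
    (hαx : DifferentiableAt ℝ αx p) (u v : ℝ × ℝ) :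
    fderiv ℝ (planarConnection αt αx) p u v = v.1 • fderiv ℝ αt p u + v.2 • fderiv ℝ αx p u := by
  have ht := HasFDerivAt.comp (F := E →L[ℝ] E) (G := ℝ × ℝ →L[ℝ] E →L[ℝ] E) p
    (ContinuousLinearMap.smulRightL ℝ (ℝ × ℝ) (E →L[ℝ] E)
      (ContinuousLinearMap.fst ℝ ℝ ℝ)).hasFDerivAt hαt.hasFDerivAt
  have hx := HasFDerivAt.comp (F := E →L[ℝ] E) (G := ℝ × ℝ →L[ℝ] E →L[ℝ] E) p
    (ContinuousLinearMap.smulRightL ℝ (ℝ × ℝ) (E →L[ℝ] E)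
      (ContinuousLinearMap.snd ℝ ℝ ℝ)).hasFDerivAt hαx.hasFDerivAt
  exact DFunLike.congr_fun (DFunLike.congr_fun (ht.add hx).fderiv u) v

theorem connectionCurvature_planarConnection {p : ℝ × ℝ} (hαt : DifferentiableAt ℝ αt p)
    (hαx : DifferentiableAt ℝ αx p) (u v : ℝ × ℝ) :
    connectionCurvature (planarConnection αt αx) p u v = (u.1 * v.2 - u.2 * v.1) •
      (fderiv ℝ αx p (1, 0) - fderiv ℝ αt p (0, 1) + (αt p * αx p - αx p * αt p)) := by
  simp only [connectionCurvature, fderiv_planarConnection_apply hαt hαx, planarConnection_apply,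
    apply_eq_fst_smul_add_snd_smul (fderiv ℝ αt p) u,
    apply_eq_fst_smul_add_snd_smul (fderiv ℝ αt p) v,
    apply_eq_fst_smul_add_snd_smul (fderiv ℝ αx p) u,
    apply_eq_fst_smul_add_snd_smul (fderiv ℝ αx p) v, add_mul, mul_add, smul_mul_assoc,
    mul_smul_comm]
  module

theorem isCovariantlyConstant_planarConnection_iff {f : ℝ × ℝ → E} (hf : Differentiable ℝ f) :
    IsCovariantlyConstant (planarConnection αt αx) f ↔
      ∀ p, fderiv ℝ f p (1, 0) + αt p (f p) = 0 ∧ fderiv ℝ f p (0, 1) + αx p (f p) = 0 := by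
  refine forall_congr' fun p ↦ ⟨fun h ↦ ?_, fun ⟨ht, hx⟩ ↦ (hf p).hasFDerivAt.congr_fderiv ?_⟩
  · simp [h.fderiv, planarConnection_apply]
  · ext <;>
      simp [planarConnection_apply, eq_neg_of_add_eq_zero_left ht, eq_neg_of_add_eq_zero_left hx]

theorem existsUnique_contDiff_planarConnection [CompleteSpace E] {k : ℕ∞} (hk : 1 ≤ k)
    (hαt : ContDiff ℝ k αt) (hαx : ContDiff ℝ k αx)
    (hflat : ∀ p : ℝ × ℝ,
      fderiv ℝ αx p (1, 0) - fderiv ℝ αt p (0, 1) + (αt p * αx p - αx p * αt p) = 0)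
    (c : E) :
    ∃! f : ℝ × ℝ → E, ContDiff ℝ k f ∧ f (0, 0) = c ∧
      ∀ p : ℝ × ℝ, fderiv ℝ f p (1, 0) + αt p (f p) = 0 ∧
        fderiv ℝ f p (0, 1) + αx p (f p) = 0 := by
  have hk' : (k : WithTop ℕ∞) ≠ 0 := mod_cast (zero_lt_one.trans_le hk).ne'
  have hA := contDiff_planarConnection hαt hαx
  have hcurv (p u v) : connectionCurvature (planarConnection αt αx) p u v = 0 := by
    rw [connectionCurvature_planarConnection (hαt.differentiable hk' p) (hαx.differentiable hk' p),
      hflat, smul_zero]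
  refine (existsUnique_congr fun f ↦ ?_).1
    (existsUnique_isCovariantlyConstant (hA.of_le (mod_cast hk)) hcurv c)
  constructor
  · rintro ⟨h0, hf⟩
    have hfk := hf.contDiff hA
    exact ⟨hfk, h0, (isCovariantlyConstant_planarConnection_iff (hfk.differentiable hk')).1 hf⟩
  · rintro ⟨hfk, h0, hf⟩
    exact ⟨h0, (isCovariantlyConstant_planarConnection_iff (hfk.differentiable hk')).2 hf⟩

end Plane

theorem flat_connection_covariantly_constant_existence_uniqueness_general {𝔤 : Type*}
    [NormedAddCommGroup 𝔤] [NormedSpace ℝ 𝔤] [CompleteSpace 𝔤] (bracket : 𝔤 →L[ℝ] 𝔤 →L[ℝ] 𝔤)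
    (jacobi : ∀ x y z, bracket (bracket x y) z = bracket x (bracket y z) - bracket y (bracket x z))
    {k : ℕ∞} (hk : 1 ≤ k) {αt αx : ℝ × ℝ → 𝔤} (hαt : ContDiff ℝ k αt) (hαx : ContDiff ℝ k αx)
    (hflat : ∀ p : ℝ × ℝ,
      fderiv ℝ αx p (1, 0) - fderiv ℝ αt p (0, 1) + bracket (αt p) (αx p) = 0)
    (c : 𝔤) :
    ∃! f : ℝ × ℝ → 𝔤,
      ContDiff ℝ k f ∧ f (0, 0) = c ∧
      ∀ p : ℝ × ℝ,
        fderiv ℝ f p (1, 0) + bracket (αt p) (f p) = 0 ∧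
        fderiv ℝ f p (0, 1) + bracket (αx p) (f p) = 0 := by
  have hfderiv {α : ℝ × ℝ → 𝔤} (hα : ContDiff ℝ k α) (p : ℝ × ℝ) :
      fderiv ℝ (fun q ↦ bracket (α q)) p = bracket ∘L fderiv ℝ α p :=
    (HasFDerivAt.comp (F := 𝔤) (G := 𝔤 →L[ℝ] 𝔤) p bracket.hasFDerivAt
      (hα.differentiable (mod_cast (zero_lt_one.trans_le hk).ne') p).hasFDerivAt).fderiv
  refine existsUnique_contDiff_planarConnection hk (bracket.contDiff.comp hαt)
    (bracket.contDiff.comp hαx) (fun p ↦ ?_) c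
  have hcomm : bracket (αt p) * bracket (αx p) - bracket (αx p) * bracket (αt p) =
      bracket (bracket (αt p) (αx p)) :=
    ContinuousLinearMap.ext fun x ↦ (jacobi (αt p) (αx p) x).symm
  simp only [Function.comp_def, hfderiv hαt, hfderiv hαx, hcomm, ContinuousLinearMap.comp_apply]
  rw [← map_sub, ← map_add, hflat, map_zero]

/-- Given smooth matrix-valued functions `αt, αx` on `ℝ²` satisfying the zero-curvature
(flatness) equation `∂ₜ αx − ∂ₓ αt + [αt, αx] = 0`, for every initial matrix `c` there is a
unique smooth `f` with `f(0,0) = c` that is covariantly constant: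
`∂ₜ f + [αt, f] = 0` and `∂ₓ f + [αx, f] = 0` everywhere. -/
theorem flat_connection_covariantly_constant_existence_uniqueness
    (n : ℕ) (hn : 1 ≤ n)
    (αt αx : ℝ × ℝ → Matrix (Fin n) (Fin n) ℝ)
    (hαt : ContDiff ℝ (⊤ : ℕ∞) αt) (hαx : ContDiff ℝ (⊤ : ℕ∞) αx)
    (hflat : ∀ p : ℝ × ℝ,
      fderiv ℝ αx p (1, 0) - fderiv ℝ αt p (0, 1)
        + (αt p * αx p - αx p * αt p) = 0)
    (c : Matrix (Fin n) (Fin n) ℝ) :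
    ∃! f : ℝ × ℝ → Matrix (Fin n) (Fin n) ℝ,
      ContDiff ℝ (⊤ : ℕ∞) f ∧ f (0, 0) = c ∧
      ∀ p : ℝ × ℝ,
        fderiv ℝ f p (1, 0) + (αt p * f p - f p * αt p) = 0 ∧
        fderiv ℝ f p (0, 1) + (αx p * f p - f p * αx p) = 0 := by
  let mul := LinearMap.mul ℝ (Matrix (Fin n) (Fin n) ℝ)
  have jacobi (a b c : Matrix (Fin n) (Fin n) ℝ) :
      (a * b - b * a) * c - c * (a * b - b * a) =
        (a * (b * c - c * b) - (b * c - c * b) * a) -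
          (b * (a * c - c * a) - (a * c - c * a) * b) := by
    noncomm_ring
  exact flat_connection_covariantly_constant_existence_uniqueness_general
    (mul - mul.flip).toContinuousBilinearMap jacobi le_top hαt hαx hflat c
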